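/- Let $d \in \mathbb{N}$ with $d \ge 1$, and let $c_0, c_1, M, \bar\varepsilon, \eta > 0$. Then there exists $K > 0$, depending only on $d, c_0, c_1, M, \bar\varepsilon, \eta$, such that the following holds. Let $\hat m \in \mathbb{R}^d$ with $\|\hat m\|_\infty \le M$, let $\hat C$ be a symmetric positive definite $d \times d$ matrix such that the entries of $\hat C$ and of $\hat C^{-1}$ are bounded by $M$ in absolute value and $$\lambda_{\min}(\hat C^{-1}) \ge 2 \bar\varepsilon c_0 + \eta,$$ where $\lambda_{\min}$ denotes the smallest eigenvalue. Let $Q(x) = \tfrac12 (x-\hat m)^T \hat C^{-1} (x-\hat m)$, and let $H : \mathbb{R}^d \to \mathbb{R}$ be measurable with $|H(x)| \le c_0 x^T x + c_1$ for all $x$. Then for every $\varepsilon \in [0, \bar\varepsilon]$ the density $p(x) = \exp(-Q(x) - \varepsilon H(x)) / \hat Z$ with $\hat Z = \int_{\mathbb{R}^d} \exp(-Q(x) - \varepsilon H(x))\,dx$ is well defined (that is, $0 < \hat Z < \infty$), it has finite first and second moments, and $$\Big\| \int x\, p(x)\, dx - \hat m \Big\|_\infty \le K \varepsilon, \qquad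 \Big\| \int x x^T p(x)\, dx - (\hat C + \hat m \hat m^T) \Big\|_\infty \le K \varepsilon,$$ where $\|\cdot\|_\infty$ denotes the maximum absolute value of the entries of a vector or matrix. -/

import Mathlib

open Matrix MeasureTheory

noncomputable section

namespace PerturbedGaussian

variable {d : ℕ}

/-- The smallest eigenvalue of a real symmetric matrix: the infimum of its (finite, and for
`d ≥ 1` nonempty) set of eigenvalues. -/
def lambdaMin (A : Matrix (Fin d) (Fin d) ℝ) : ℝ :=
  sInf (spectrum ℝ A)

/-- `Q(x) = ½ (x - m)ᵀ C⁻¹ (x - m)`. -/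
def quad (m : Fin d → ℝ) (C : Matrix (Fin d) (Fin d) ℝ) (x : Fin d → ℝ) : ℝ :=
  (1 / 2 : ℝ) * ((x - m) ⬝ᵥ (C⁻¹ *ᵥ (x - m)))

/-- The unnormalized density `exp(-Q(x) - ε H(x))`. -/
def weight (m : Fin d → ℝ) (C : Matrix (Fin d) (Fin d) ℝ) (H : (Fin d → ℝ) → ℝ) (ε : ℝ)
    (x : Fin d → ℝ) : ℝ :=
  Real.exp (-quad m C x - ε * H x)

/-- The normalization constant `∫ exp(-Q - ε H)`. -/
def normConst (m : Fin d → ℝ) (C : Matrix (Fin d) (Fin d) ℝ) (H : (Fin d → ℝ) → ℝ) (ε : ℝ) : ℝ :=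
  ∫ x : Fin d → ℝ, weight m C H ε x

/-- The density `p(x) = exp(-Q(x) - ε H(x)) / Z`. -/
def density (m : Fin d → ℝ) (C : Matrix (Fin d) (Fin d) ℝ) (H : (Fin d → ℝ) → ℝ) (ε : ℝ)
    (x : Fin d → ℝ) : ℝ :=
  weight m C H ε x / normConst m C H ε

end PerturbedGaussian

end

namespace PerturbedGaussian

theorem one_add_le_mul_exp {t s : ℝ} (ht : 0 < t) (hs : 0 ≤ s) :
    1 + s ≤ (1 + 1 / t) * Real.exp (t * s) := by
  have h1 : t * s + 1 ≤ Real.exp (t * s) := Real.add_one_le_exp _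
  have h2 : 0 < 1 / t := by positivity
  calc 1 + s ≤ (1 + 1 / t) * (t * s + 1) := by
        have : (1 + 1 / t) * (t * s + 1) = 1 + s + t * s + 1 / t := by field_simp; ring
        rw [this]
        nlinarith [mul_nonneg ht.le hs]
    _ ≤ _ := by gcongr

theorem abs_exp_sub_exp_le {u v w : ℝ} (hu : u ≤ w) (hv : v ≤ w) :
    |Real.exp u - Real.exp v| ≤ |u - v| * Real.exp w := by
  have key : ∀ a b : ℝ, a ≤ w → Real.exp a - Real.exp b ≤ |a - b| * Real.exp w := by
    intro a b ha
    have h1 : b - a + 1 ≤ Real.exp (b - a) := Real.add_one_le_exp _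
    have h2 : Real.exp b = Real.exp (b - a) * Real.exp a := by rw [← Real.exp_add]; ring_nf
    have h3 : Real.exp a ≤ Real.exp w := Real.exp_le_exp.mpr ha
    calc Real.exp a - Real.exp b ≤ (a - b) * Real.exp a := by
          rw [h2]; nlinarith [Real.exp_pos a]
      _ ≤ |a - b| * Real.exp a := by gcongr; exact le_abs_self _
      _ ≤ _ := by gcongr
  rw [abs_le]
  constructor
  · have := key v u hv
    rw [abs_sub_comm] at this
    linarith
  · exact key u v hu

theorem dotProduct_self_nonneg_real {d : ℕ} (y : Fin d → ℝ) : 0 ≤ y ⬝ᵥ y :=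
  Finset.sum_nonneg fun i _ => mul_self_nonneg (y i)

theorem sq_le_dotProduct_self {d : ℕ} (y : Fin d → ℝ) (i : Fin d) : y i ^ 2 ≤ y ⬝ᵥ y := by
  rw [sq]
  exact Finset.single_le_sum (f := fun i => y i * y i) (fun i _ => mul_self_nonneg (y i))
    (Finset.mem_univ i)

theorem abs_apply_le_one_add_dotProduct {d : ℕ} (y : Fin d → ℝ) (i : Fin d) :
    |y i| ≤ 1 + y ⬝ᵥ y := by
  have h := sq_le_dotProduct_self y i
  rw [← sq_abs] at h
  nlinarith [sq_nonneg (|y i| - 1), abs_nonneg (y i)]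

theorem abs_mul_apply_le_dotProduct {d : ℕ} (y : Fin d → ℝ) (i j : Fin d) :
    |y i * y j| ≤ y ⬝ᵥ y := by
  have h1 := sq_le_dotProduct_self y i
  have h2 := sq_le_dotProduct_self y j
  rw [abs_le]
  constructor <;> nlinarith [sq_nonneg (y i - y j), sq_nonneg (y i + y j)]

theorem dotProduct_self_le_of_abs_le {d : ℕ} {y : Fin d → ℝ} {R : ℝ} (h : ∀ i, |y i| ≤ R) :
    y ⬝ᵥ y ≤ d * R ^ 2 := by
  calc y ⬝ᵥ y ≤ ∑ _i : Fin d, R ^ 2 := Finset.sum_le_sum fun i _ => by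
        rw [← sq, ← sq_abs]; exact pow_le_pow_left₀ (abs_nonneg _) (h i) 2
    _ = d * R ^ 2 := by simp

theorem dotProduct_mulVec_le_of_abs_le {d : ℕ} {y : Fin d → ℝ} {A : Matrix (Fin d) (Fin d) ℝ}
    {M : ℝ} (hA : ∀ i j, |A i j| ≤ M) : y ⬝ᵥ (A *ᵥ y) ≤ d ^ 2 * M * (y ⬝ᵥ y) := by
  have h : ∀ i j, y i * (A i j * y j) ≤ M * (y ⬝ᵥ y) := fun i j => by
    calc y i * (A i j * y j) ≤ |A i j * (y i * y j)| := by
          rw [show y i * (A i j * y j) = A i j * (y i * y j) by ring]; exact le_abs_self _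
      _ = |A i j| * |y i * y j| := abs_mul _ _
      _ ≤ M * (y ⬝ᵥ y) := mul_le_mul (hA i j) (abs_mul_apply_le_dotProduct y i j)
          (abs_nonneg _) ((abs_nonneg _).trans (hA i j))
  calc y ⬝ᵥ (A *ᵥ y) = ∑ i, ∑ j, y i * (A i j * y j) := by
        simp only [dotProduct, mulVec, Finset.mul_sum]
    _ ≤ ∑ _i : Fin d, ∑ _j : Fin d, M * (y ⬝ᵥ y) :=
        Finset.sum_le_sum fun i _ => Finset.sum_le_sum fun j _ => h i j
    _ = _ := by simp; ring

/-- Young's inequality for the squared Euclidean norm of a sum. -/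
theorem dotProduct_self_add_le {d : ℕ} (y m : Fin d → ℝ) {δ : ℝ} (hδ : 0 < δ) :
    (y + m) ⬝ᵥ (y + m) ≤ (1 + δ) * (y ⬝ᵥ y) + (1 + 1 / δ) * (m ⬝ᵥ m) := by
  simp only [dotProduct, Finset.mul_sum, ← Finset.sum_add_distrib]
  refine Finset.sum_le_sum fun i _ => ?_
  have h : (1 + δ) * (y i * y i) + (1 + 1 / δ) * (m i * m i)
      - (y + m) i * (y + m) i = (δ * y i - m i) ^ 2 / δ := by
    simp only [Pi.add_apply]; field_simp; ring
  have : 0 ≤ (δ * y i - m i) ^ 2 / δ := by positivity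
  linarith

theorem lambdaMin_mul_dotProduct_le {d : ℕ} {A : Matrix (Fin d) (Fin d) ℝ} (hA : A.IsHermitian)
    (y : Fin d → ℝ) : lambdaMin A * (y ⬝ᵥ y) ≤ y ⬝ᵥ (A *ᵥ y) := by
  have hB : (A - algebraMap ℝ (Matrix (Fin d) (Fin d) ℝ) (lambdaMin A)).PosSemidef := by
    have hH : (A - algebraMap ℝ (Matrix (Fin d) (Fin d) ℝ) (lambdaMin A)).IsHermitian := by
      refine hA.sub ?_
      rw [Matrix.algebraMap_eq_diagonal]
      exact Matrix.isHermitian_diagonal _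
    rw [hH.posSemidef_iff_eigenvalues_nonneg]
    intro i
    have h := hH.eigenvalues_mem_spectrum_real i
    rw [← spectrum.sub_singleton_eq] at h
    obtain ⟨a, ha, b, rfl, hab⟩ := Set.mem_sub.mp h
    have : lambdaMin A ≤ a := csInf_le A.finite_spectrum.bddBelow ha
    simp only [Pi.zero_apply]
    linarith
  have h := hB.dotProduct_mulVec_nonneg y
  rw [Matrix.sub_mulVec, dotProduct_sub, Algebra.algebraMap_eq_smul_one, Matrix.smul_mulVec,
    Matrix.one_mulVec, dotProduct_smul, star_trivial, smul_eq_mul] at h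
  linarith

theorem integrable_exp_neg_dotProduct {d : ℕ} {b : ℝ} (hb : 0 < b) :
    Integrable fun y : Fin d → ℝ => Real.exp (-(b * (y ⬝ᵥ y))) := by
  have h := Integrable.fintype_prod (ι := Fin d) (f := fun _ x => Real.exp (-b * x ^ 2))
    (μ := fun _ => (volume : Measure ℝ)) fun _ => integrable_exp_neg_mul_sq hb
  refine (h.congr (Filter.Eventually.of_forall fun y => ?_))
  simp only [← Real.exp_sum, dotProduct, Finset.mul_sum, ← Finset.sum_neg_distrib]
  congr 1
  exact Finset.sum_congr rfl fun i _ => by ring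

/-- A function of quadratic growth is integrable against a nondegenerate Gaussian weight. -/
theorem integrable_mul_gaussian {d : ℕ} {A : Matrix (Fin d) (Fin d) ℝ} {b D : ℝ} (hb : 0 < b)
    (hA : ∀ y : Fin d → ℝ, b * (y ⬝ᵥ y) ≤ y ⬝ᵥ (A *ᵥ y)) {f : (Fin d → ℝ) → ℝ}
    (hf : Continuous f) (hfD : ∀ y, |f y| ≤ D * (1 + y ⬝ᵥ y)) :
    Integrable fun y => f y * Real.exp (-(1 / 2 * (y ⬝ᵥ (A *ᵥ y)))) := by
  refine ((integrable_exp_neg_dotProduct (d := d) (b := b / 4) (by positivity)).const_mul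
    (D * (1 + 1 / (b / 4)))).mono' ?_ (Filter.Eventually.of_forall fun y => ?_)
  · exact Continuous.aestronglyMeasurable (by fun_prop)
  · have hs := dotProduct_self_nonneg_real y
    have hD : 0 ≤ D := by
      have := (abs_nonneg _).trans (hfD y)
      by_contra hneg
      nlinarith
    rw [Real.norm_eq_abs, abs_mul, Real.abs_exp]
    calc |f y| * Real.exp (-(1 / 2 * (y ⬝ᵥ (A *ᵥ y))))
        ≤ (D * ((1 + 1 / (b / 4)) * Real.exp (b / 4 * (y ⬝ᵥ y)))) *
            Real.exp (-(1 / 2 * (b * (y ⬝ᵥ y)))) := by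
          gcongr
          · exact (hfD y).trans (by gcongr; exact one_add_le_mul_exp (by positivity) hs)
          · exact hA y
      _ = D * (1 + 1 / (b / 4)) *
            (Real.exp (b / 4 * (y ⬝ᵥ y)) * Real.exp (-(1 / 2 * (b * (y ⬝ᵥ y))))) := by ring
      _ = _ := by rw [← Real.exp_add]; congr 2; ring

theorem integral_apply_mul_gaussian {d : ℕ} (A : Matrix (Fin d) (Fin d) ℝ) (i : Fin d) :
    ∫ y : Fin d → ℝ, y i * Real.exp (-(1 / 2 * (y ⬝ᵥ (A *ᵥ y)))) = 0 := by
  have h := integral_neg_eq_self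
    (fun y : Fin d → ℝ => y i * Real.exp (-(1 / 2 * (y ⬝ᵥ (A *ᵥ y))))) volume
  simp only [Pi.neg_apply, mulVec_neg, dotProduct_neg, neg_dotProduct, neg_neg, neg_mul,
    integral_neg] at h
  linarith

theorem hasLineDerivAt_gaussian {d : ℕ} {A : Matrix (Fin d) (Fin d) ℝ} (hA : A.IsSymm)
    (y : Fin d → ℝ) (k : Fin d) :
    HasLineDerivAt ℝ (fun y : Fin d → ℝ => Real.exp (-(1 / 2 * (y ⬝ᵥ (A *ᵥ y)))))
      (-((A *ᵥ y) k * Real.exp (-(1 / 2 * (y ⬝ᵥ (A *ᵥ y)))))) y (Pi.single k 1) := by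
  have hexp : ∀ t : ℝ, (y + t • Pi.single k (1 : ℝ)) ⬝ᵥ (A *ᵥ (y + t • Pi.single k (1 : ℝ)))
      = y ⬝ᵥ (A *ᵥ y) + 2 * t * (A *ᵥ y) k + t ^ 2 * A k k := fun t => by
    have h1 : y ⬝ᵥ (A *ᵥ Pi.single k (1 : ℝ)) = (A *ᵥ y) k := by
      rw [dotProduct_mulVec, dotProduct_single, mul_one, ← mulVec_transpose, hA.eq]
    have h2 : (A *ᵥ Pi.single k (1 : ℝ)) k = A k k := by simp
    rw [mulVec_add, mulVec_smul, add_dotProduct, dotProduct_add, dotProduct_add, dotProduct_smul,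
      smul_dotProduct, smul_dotProduct, dotProduct_smul, single_dotProduct, single_dotProduct,
      h1, h2]
    simp only [smul_eq_mul]
    ring
  unfold HasLineDerivAt
  simp only [hexp]
  have hpoly : HasDerivAt (fun t : ℝ => -(1 / 2 * (y ⬝ᵥ (A *ᵥ y) + 2 * t * (A *ᵥ y) k
      + t ^ 2 * A k k))) (-((A *ᵥ y) k)) 0 := by
    have h1 : HasDerivAt (fun t : ℝ => 2 * t * (A *ᵥ y) k) (2 * 1 * (A *ᵥ y) k) 0 :=
      ((hasDerivAt_id (0 : ℝ)).const_mul 2).mul_const _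
    have h2 : HasDerivAt (fun t : ℝ => t ^ 2 * A k k) (2 * 0 * A k k) 0 := by
      simpa using (hasDerivAt_pow 2 (0 : ℝ)).mul_const (A k k)
    convert! (((h1.const_add (y ⬝ᵥ (A *ᵥ y))).add h2).const_mul (1 / 2)).neg using 1
    ring
  convert! hpoly.exp using 1
  simp
  ring

theorem integrable_apply_mul_mulVec_mul_gaussian {d : ℕ} {A : Matrix (Fin d) (Fin d) ℝ} {b : ℝ}
    (hb : 0 < b) (hA : ∀ y : Fin d → ℝ, b * (y ⬝ᵥ y) ≤ y ⬝ᵥ (A *ᵥ y)) (j k : Fin d) :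
    Integrable fun y : Fin d → ℝ =>
      y j * (A *ᵥ y) k * Real.exp (-(1 / 2 * (y ⬝ᵥ (A *ᵥ y)))) := by
  have : ∀ l, Integrable fun y : Fin d → ℝ =>
      A k l * (y j * y l * Real.exp (-(1 / 2 * (y ⬝ᵥ (A *ᵥ y))))) := fun l =>
    (integrable_mul_gaussian (D := 1) hb hA (f := fun y => y j * y l) (by fun_prop)
      fun y => by linarith [abs_mul_apply_le_dotProduct y j l]).const_mul _
  refine (integrable_finsetSum Finset.univ fun l _ => this l).congr
    (Filter.Eventually.of_forall fun y => ?_)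
  simp only [mulVec, dotProduct, Finset.mul_sum, Finset.sum_mul]
  exact Finset.sum_congr rfl fun l _ => by ring

/-- Gaussian integration by parts. -/
theorem integral_apply_mul_mulVec_mul_gaussian {d : ℕ} {A : Matrix (Fin d) (Fin d) ℝ} {b : ℝ}
    (hb : 0 < b) (hsymm : A.IsSymm) (hA : ∀ y : Fin d → ℝ, b * (y ⬝ᵥ y) ≤ y ⬝ᵥ (A *ᵥ y))
    (j k : Fin d) :
    ∫ y : Fin d → ℝ, y j * (A *ᵥ y) k * Real.exp (-(1 / 2 * (y ⬝ᵥ (A *ᵥ y)))) =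
      (1 : Matrix (Fin d) (Fin d) ℝ) k j *
        ∫ y : Fin d → ℝ, Real.exp (-(1 / 2 * (y ⬝ᵥ (A *ᵥ y)))) := by
  set g : (Fin d → ℝ) → ℝ := fun y => Real.exp (-(1 / 2 * (y ⬝ᵥ (A *ᵥ y)))) with hg
  have hg0 : Integrable g := by
    have h := integrable_mul_gaussian (D := 1) hb hA (f := fun _ => 1) continuous_const
      fun y => by simpa using dotProduct_self_nonneg_real y
    simpa only [one_mul] using h
  have hg1 : Integrable fun y => y j * g y :=
    integrable_mul_gaussian (D := 1) hb hA (f := fun y => y j) (by fun_prop)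
      fun y => by simpa using abs_apply_le_one_add_dotProduct y j
  have hg2 := integrable_apply_mul_mulVec_mul_gaussian hb hA j k
  have key := integral_bilinear_hasLineDerivAt_right_eq_neg_left_of_integrable (μ := volume)
    (f := fun y : Fin d → ℝ => y j) (f' := fun _ => (1 : Matrix (Fin d) (Fin d) ℝ) k j)
    (g := g) (g' := fun y => -((A *ᵥ y) k * g y)) (v := Pi.single k 1)
    (B := ContinuousLinearMap.mul ℝ ℝ)
    (by simpa using hg0.const_mul _)
    (by
      refine hg2.neg.congr (Filter.Eventually.of_forall fun y => ?_)
      simp only [Pi.neg_apply, ContinuousLinearMap.mul_apply']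
      ring)
    (by simpa using hg1)
    (fun y _ => by
      have h : HasDerivAt (fun t : ℝ => y j + t * (1 : Matrix (Fin d) (Fin d) ℝ) k j)
          (1 * (1 : Matrix (Fin d) (Fin d) ℝ) k j) 0 :=
        ((hasDerivAt_id (0 : ℝ)).mul_const _).const_add _
      unfold HasLineDerivAt
      simpa [Matrix.one_apply, Pi.single_apply, eq_comm] using h)
    (fun y _ => hasLineDerivAt_gaussian hsymm y k)
  simp only [ContinuousLinearMap.mul_apply', integral_const_mul, mul_neg, integral_neg] at key
  rw [neg_inj] at key
  simpa only [mul_assoc] using key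

theorem integral_apply_mul_apply_mul_gaussian {d : ℕ} {C : Matrix (Fin d) (Fin d) ℝ} {b : ℝ}
    (hb : 0 < b) (hC : C.PosDef)
    (hA : ∀ y : Fin d → ℝ, b * (y ⬝ᵥ y) ≤ y ⬝ᵥ (C⁻¹ *ᵥ y)) (i j : Fin d) :
    ∫ y : Fin d → ℝ, y i * y j * Real.exp (-(1 / 2 * (y ⬝ᵥ (C⁻¹ *ᵥ y)))) =
      C i j * ∫ y : Fin d → ℝ, Real.exp (-(1 / 2 * (y ⬝ᵥ (C⁻¹ *ᵥ y)))) := by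
  have hsymm : (C⁻¹).IsSymm := by
    have := hC.inv.isHermitian
    rwa [Matrix.IsHermitian, conjTranspose_eq_transpose_of_trivial] at this
  have hinv : C * C⁻¹ = 1 := Matrix.mul_nonsing_inv _ hC.det_pos.ne'.isUnit
  have hy : ∀ y : Fin d → ℝ, y i = ∑ k, C i k * (C⁻¹ *ᵥ y) k := fun y => by
    change y i = (C *ᵥ (C⁻¹ *ᵥ y)) i
    rw [mulVec_mulVec, hinv, one_mulVec]
  have hInt := integrable_apply_mul_mulVec_mul_gaussian hb hA j
  calc ∫ y : Fin d → ℝ, y i * y j * Real.exp (-(1 / 2 * (y ⬝ᵥ (C⁻¹ *ᵥ y))))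
      = ∫ y : Fin d → ℝ, ∑ k, C i k *
          (y j * (C⁻¹ *ᵥ y) k * Real.exp (-(1 / 2 * (y ⬝ᵥ (C⁻¹ *ᵥ y))))) := by
        refine integral_congr_ae (Filter.Eventually.of_forall fun y => ?_)
        simp only
        rw [hy y, Finset.sum_mul, Finset.sum_mul]
        exact Finset.sum_congr rfl fun l _ => by ring
    _ = _ := by
        rw [integral_finsetSum _ fun k _ => (hInt k).const_mul _]
        simp only [integral_const_mul, integral_apply_mul_mulVec_mul_gaussian hb hsymm hA]
        simp [Matrix.one_apply]

theorem abs_integral_mul_div_sub_le {X : Type*} [MeasurableSpace X] {μ : Measure X}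
    {f w w₀ g : X → ℝ} {a κ z : ℝ} (hκ : 0 ≤ κ) (hg0 : ∀ x, 0 ≤ g x) (hw : Integrable w μ)
    (hfw : Integrable (fun x => f x * w x) μ)
    (hfw₀ : Integrable (fun x => (f x - a) * w₀ x) μ) (h₀ : ∫ x, (f x - a) * w₀ x ∂μ = 0)
    (hg : Integrable g μ) (hbound : ∀ x, |(f x - a) * (w x - w₀ x)| ≤ κ * g x)
    (hz : 0 < z) (hzw : z ≤ ∫ x, w x ∂μ) :
    |(∫ x, f x * (w x / ∫ x, w x ∂μ) ∂μ) - a| ≤ κ * (∫ x, g x ∂μ) / z := by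
  have hZ : 0 < ∫ x, w x ∂μ := hz.trans_le hzw
  have hfaw : Integrable (fun x => (f x - a) * w x) μ := by
    simp only [sub_mul]
    exact hfw.sub (hw.const_mul a)
  have h1 : (∫ x, f x * (w x / ∫ x, w x ∂μ) ∂μ) - a
      = (∫ x, (f x - a) * (w x - w₀ x) ∂μ) / ∫ x, w x ∂μ := by
    have h2 : ∫ x, (f x - a) * (w x - w₀ x) ∂μ = (∫ x, f x * w x ∂μ) - a * ∫ x, w x ∂μ := by
      simp only [mul_sub]
      rw [integral_sub hfaw hfw₀, h₀, sub_zero]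
      simp only [sub_mul]
      rw [integral_sub hfw (hw.const_mul a), integral_const_mul]
    simp only [← mul_div_assoc, integral_div]
    rw [h2]
    field_simp
  have h3 : |∫ x, (f x - a) * (w x - w₀ x) ∂μ| ≤ κ * ∫ x, g x ∂μ := by
    rw [← Real.norm_eq_abs, ← integral_const_mul]
    exact norm_integral_le_of_norm_le (hg.const_mul κ) (Filter.Eventually.of_forall hbound)
  rw [h1, abs_div, abs_of_pos hZ]
  have : 0 ≤ ∫ x, g x ∂μ := integral_nonneg hg0
  gcongr

section

variable {d : ℕ} {m : Fin d → ℝ} {C : Matrix (Fin d) (Fin d) ℝ} {H : (Fin d → ℝ) → ℝ}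
  {c0 c1 M εbar η ε : ℝ}

theorem abs_le_mul_one_add_dotProduct (hc0 : 0 < c0) (hc1 : 0 < c1) (hm : ∀ i, |m i| ≤ M)
    (hH : ∀ x, |H x| ≤ c0 * (x ⬝ᵥ x) + c1) (x : Fin d → ℝ) :
    |H x| ≤ (2 * c0 + 2 * c0 * (d * M ^ 2) + c1) * (1 + (x - m) ⬝ᵥ (x - m)) := by
  have h1 := dotProduct_self_add_le (x - m) m one_pos
  rw [sub_add_cancel] at h1
  have h2 := dotProduct_self_le_of_abs_le hm
  have hs := dotProduct_self_nonneg_real (x - m)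
  have hd : (0 : ℝ) ≤ d * M ^ 2 := by positivity
  have h3 : c0 * (x ⬝ᵥ x) ≤ c0 * (2 * ((x - m) ⬝ᵥ (x - m)) + 2 * (d * M ^ 2)) := by
    gcongr; linarith
  nlinarith [hH x, mul_nonneg hc1.le hs, mul_nonneg (mul_nonneg hc0.le hd) hs]

/-- The perturbation does not destroy the quadratic decay of the exponent. -/
theorem neg_quad_add_le (hc0 : 0 < c0) (hεbar : 0 < εbar) (hη : 0 < η)
    (hm : ∀ i, |m i| ≤ M)
    (hA : ∀ y : Fin d → ℝ, (2 * εbar * c0 + η) * (y ⬝ᵥ y) ≤ y ⬝ᵥ (C⁻¹ *ᵥ y))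
    (hH : ∀ x, |H x| ≤ c0 * (x ⬝ᵥ x) + c1) (hε : ε ≤ εbar) (x : Fin d → ℝ) :
    -quad m C x + ε * |H x| ≤
      εbar * (c0 * ((1 + 1 / (η / (4 * εbar * c0))) * (d * M ^ 2)) + c1)
        - η / 4 * ((x - m) ⬝ᵥ (x - m)) := by
  set δ := η / (4 * εbar * c0) with hδ
  have hδ0 : 0 < δ := by positivity
  have h1 := dotProduct_self_add_le (x - m) m hδ0
  rw [sub_add_cancel] at h1
  have h2 := dotProduct_self_le_of_abs_le hm
  have h3 := hA (x - m)
  have h4 : x ⬝ᵥ x ≤ (1 + δ) * ((x - m) ⬝ᵥ (x - m)) + (1 + 1 / δ) * (d * M ^ 2) :=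
    h1.trans (by gcongr)
  have h5 : ε * |H x| ≤ εbar * (c0 * ((1 + δ) * ((x - m) ⬝ᵥ (x - m))
      + (1 + 1 / δ) * (d * M ^ 2)) + c1) :=
    mul_le_mul hε ((hH x).trans (by gcongr)) (abs_nonneg _) hεbar.le
  have h6 : εbar * c0 * δ = η / 4 := by rw [hδ]; field_simp
  have h7 : εbar * (c0 * ((1 + δ) * ((x - m) ⬝ᵥ (x - m)) + (1 + 1 / δ) * (d * M ^ 2)) + c1)
      = εbar * c0 * ((x - m) ⬝ᵥ (x - m)) + (εbar * c0 * δ) * ((x - m) ⬝ᵥ (x - m))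
        + εbar * (c0 * ((1 + 1 / δ) * (d * M ^ 2)) + c1) := by ring
  rw [h7, h6] at h5
  unfold quad
  linarith

theorem continuous_quad : Continuous (quad m C) := by
  unfold quad; fun_prop

theorem measurable_weight (hH : Measurable H) : Measurable (weight m C H ε) :=
  Real.measurable_exp.comp ((continuous_quad.measurable.neg).sub (hH.const_mul ε))

theorem weight_le {B t : ℝ} (hε0 : 0 ≤ ε) (x : Fin d → ℝ)
    (hB : -quad m C x + ε * |H x| ≤ B - t) : weight m C H ε x ≤ Real.exp B * Real.exp (-t) := by
  rw [← Real.exp_add, weight]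
  refine Real.exp_le_exp.mpr (le_trans ?_ (hB.trans (by linarith)))
  have := mul_le_mul_of_nonneg_left (neg_abs_le (H x)) hε0
  linarith

theorem abs_weight_sub_le {B t : ℝ} (hε0 : 0 ≤ ε) (x : Fin d → ℝ)
    (hB : -quad m C x + ε * |H x| ≤ B - t) :
    |weight m C H ε x - Real.exp (-quad m C x)| ≤
      ε * |H x| * (Real.exp B * Real.exp (-t)) := by
  have h1 := mul_le_mul_of_nonneg_left (neg_abs_le (H x)) hε0
  have h2 := mul_nonneg hε0 (abs_nonneg (H x))
  have h := abs_exp_sub_exp_le (u := -quad m C x - ε * H x) (v := -quad m C x) (w := B + -t)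
    (by linarith) (by linarith)
  rw [Real.exp_add, show -quad m C x - ε * H x - -quad m C x = -(ε * H x) by ring, abs_neg,
    abs_mul, abs_of_nonneg hε0] at h
  exact h

/-- A lower bound for the normalization constant, from the integral over a unit ball. -/
theorem le_normConst (hc0 : 0 < c0) (hc1 : 0 < c1) (hM : 0 < M)
    (hm : ∀ i, |m i| ≤ M) (hC : ∀ i j, |C⁻¹ i j| ≤ M)
    (hH : ∀ x, |H x| ≤ c0 * (x ⬝ᵥ x) + c1) (hε0 : 0 ≤ ε) (hε : ε ≤ εbar)
    (hInt : Integrable (weight m C H ε)) :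
    Real.exp (-(1 / 2 * (d ^ 2 * M * d)) -
      εbar * ((2 * c0 + 2 * c0 * (d * M ^ 2) + c1) * (1 + d))) * 2 ^ d ≤ normConst m C H ε := by
  have hvol : volume.real (Metric.closedBall m 1) = 2 ^ d := by
    rw [measureReal_def, Real.volume_pi_closedBall m zero_le_one,
      ENNReal.toReal_ofReal (by positivity)]
    simp
  have hfin : volume (Metric.closedBall m 1) ≠ ⊤ := measure_closedBall_lt_top.ne
  have hpt : ∀ x ∈ Metric.closedBall m 1, Real.exp (-(1 / 2 * (d ^ 2 * M * d)) -
      εbar * ((2 * c0 + 2 * c0 * (d * M ^ 2) + c1) * (1 + d))) ≤ weight m C H ε x := by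
    intro x hx
    have hy : ∀ i, |(x - m) i| ≤ 1 := fun i => by
      rw [← Real.norm_eq_abs]
      exact (norm_le_pi_norm (x - m) i).trans (by simpa [dist_eq_norm] using hx)
    have hs := dotProduct_self_le_of_abs_le hy
    rw [one_pow, mul_one] at hs
    have hq : quad m C x ≤ 1 / 2 * (d ^ 2 * M * d) := by
      unfold quad
      gcongr
      exact (dotProduct_mulVec_le_of_abs_le hC).trans (by gcongr)
    have hh : ε * |H x| ≤ εbar * ((2 * c0 + 2 * c0 * (d * M ^ 2) + c1) * (1 + d)) :=
      mul_le_mul hε ((abs_le_mul_one_add_dotProduct hc0 hc1 hm hH x).trans (by gcongr))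
        (abs_nonneg _) (hε0.trans hε)
    have := mul_le_mul_of_nonneg_left (le_abs_self (H x)) hε0
    exact Real.exp_le_exp.mpr (by linarith)
  calc _ = ∫ _ in Metric.closedBall m 1, Real.exp (-(1 / 2 * (d ^ 2 * M * d)) -
      εbar * ((2 * c0 + 2 * c0 * (d * M ^ 2) + c1) * (1 + d))) := by
        rw [setIntegral_const, hvol, smul_eq_mul, mul_comm]
    _ ≤ ∫ x in Metric.closedBall m 1, weight m C H ε x :=
        setIntegral_mono_on (integrableOn_const hfin) hInt.integrableOn
          Metric.isClosed_closedBall.measurableSet hpt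
    _ ≤ normConst m C H ε :=
        setIntegral_le_integral hInt (Filter.Eventually.of_forall fun x => (Real.exp_pos _).le)

theorem integral_sub_apply_mul_exp_neg_quad (i : Fin d) :
    ∫ x : Fin d → ℝ, (x i - m i) * Real.exp (-quad m C x) = 0 :=
  (integral_sub_right_eq_self (μ := volume)
    (fun y : Fin d → ℝ => y i * Real.exp (-(1 / 2 * (y ⬝ᵥ (C⁻¹ *ᵥ y))))) m).trans
    (integral_apply_mul_gaussian _ i)

theorem integrable_mul_exp_neg_quad {b D : ℝ} (hb : 0 < b)
    (hA : ∀ y : Fin d → ℝ, b * (y ⬝ᵥ y) ≤ y ⬝ᵥ (C⁻¹ *ᵥ y)) {f : (Fin d → ℝ) → ℝ}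
    (hf : Continuous f) (hfD : ∀ x, |f x| ≤ D * (1 + (x - m) ⬝ᵥ (x - m))) :
    Integrable fun x => f x * Real.exp (-quad m C x) := by
  have h := (integrable_mul_gaussian (f := fun y => f (y + m)) hb hA (by fun_prop)
    fun y => by simpa using hfD (y + m)).comp_sub_right m
  simpa only [sub_add_cancel, quad] using h

theorem integral_sub_apply_mul_apply_mul_exp_neg_quad {b : ℝ} (hb : 0 < b) (hC : C.PosDef)
    (hA : ∀ y : Fin d → ℝ, b * (y ⬝ᵥ y) ≤ y ⬝ᵥ (C⁻¹ *ᵥ y)) (i j : Fin d) :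
    ∫ x : Fin d → ℝ, (x i * x j - (C i j + m i * m j)) * Real.exp (-quad m C x) = 0 := by
  set g : (Fin d → ℝ) → ℝ := fun y => Real.exp (-(1 / 2 * (y ⬝ᵥ (C⁻¹ *ᵥ y)))) with hg
  have hg0 : Integrable g := by
    have h := integrable_mul_gaussian (D := 1) hb hA (f := fun _ => 1) continuous_const
      fun y => by simpa using dotProduct_self_nonneg_real y
    simpa only [one_mul] using h
  have hg1 : ∀ k, Integrable fun y => y k * g y := fun k =>
    integrable_mul_gaussian (D := 1) hb hA (f := fun y => y k) (by fun_prop)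
      fun y => by simpa using abs_apply_le_one_add_dotProduct y k
  have hg2 : Integrable fun y => y i * y j * g y :=
    integrable_mul_gaussian (D := 1) hb hA (f := fun y => y i * y j) (by fun_prop)
      fun y => by linarith [abs_mul_apply_le_dotProduct y i j]
  have hsecond : Integrable fun y => y i * y j * g y - C i j * g y := hg2.sub (hg0.const_mul _)
  have hfirst : Integrable fun y => m i * (y j * g y) + m j * (y i * g y) :=
    ((hg1 j).const_mul _).add ((hg1 i).const_mul _)
  have h := integral_sub_right_eq_self (μ := volume)
    (fun y : Fin d → ℝ => (y i * y j * g y - C i j * g y)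
      + (m i * (y j * g y) + m j * (y i * g y))) m
  rw [integral_add hsecond hfirst, integral_sub hg2 (hg0.const_mul _),
    integral_add ((hg1 j).const_mul _) ((hg1 i).const_mul _), integral_const_mul,
    integral_const_mul, integral_const_mul, integral_apply_mul_gaussian,
    integral_apply_mul_gaussian, integral_apply_mul_apply_mul_gaussian hb hC hA] at h
  simp only [hg, mul_zero, add_zero, sub_self] at h
  rw [← h]
  refine integral_congr_ae (Filter.Eventually.of_forall fun x => ?_)
  simp only [quad, Pi.sub_apply]
  ring

theorem abs_apply_mul_apply_sub_le (hM : 0 < M) (hm : ∀ i, |m i| ≤ M)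
    (hC : ∀ i j, |C i j| ≤ M) (x : Fin d → ℝ) (i j : Fin d) :
    |x i * x j - (C i j + m i * m j)| ≤ (1 + 3 * M) * (1 + (x - m) ⬝ᵥ (x - m)) := by
  have h1 := abs_mul_apply_le_dotProduct (x - m) i j
  have h2 : ∀ k l, |m k * (x - m) l| ≤ M * (1 + (x - m) ⬝ᵥ (x - m)) := fun k l => by
    rw [abs_mul]
    exact mul_le_mul (hm k) (abs_apply_le_one_add_dotProduct _ l) (abs_nonneg _) hM.le
  have h3 := hC i j
  have hs := dotProduct_self_nonneg_real (x - m)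
  have heq : x i * x j - (C i j + m i * m j)
      = (x - m) i * (x - m) j + m i * (x - m) j + m j * (x - m) i - C i j := by
    simp only [Pi.sub_apply]; ring
  rw [heq]
  have ha := abs_le.mp h1
  have hb := abs_le.mp (h2 i j)
  have hc := abs_le.mp (h2 j i)
  have hd := abs_le.mp h3
  have hMs := mul_nonneg hM.le hs
  rw [abs_le]
  constructor <;> nlinarith

theorem sq_one_add_mul_exp_le (hη : 0 < η) {s : ℝ} (hs : 0 ≤ s) :
    (1 + s) ^ 2 * Real.exp (-(η / 4 * s)) ≤
      (1 + 1 / (η / 16)) ^ 2 * Real.exp (-(η / 8 * s)) := by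
  have h := one_add_le_mul_exp (t := η / 16) (by positivity) hs
  calc (1 + s) ^ 2 * Real.exp (-(η / 4 * s))
      ≤ ((1 + 1 / (η / 16)) * Real.exp (η / 16 * s)) ^ 2 * Real.exp (-(η / 4 * s)) := by gcongr
    _ = (1 + 1 / (η / 16)) ^ 2 *
        (Real.exp (η / 16 * s) * Real.exp (η / 16 * s) * Real.exp (-(η / 4 * s))) := by ring
    _ = _ := by rw [← Real.exp_add, ← Real.exp_add]; congr 2; ring

theorem integrable_mul_weight {B D : ℝ} (hη : 0 < η) (hHm : Measurable H) (hε0 : 0 ≤ ε)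
    (hB : ∀ x, -quad m C x + ε * |H x| ≤ B - η / 4 * ((x - m) ⬝ᵥ (x - m)))
    {f : (Fin d → ℝ) → ℝ} (hf : Continuous f)
    (hfD : ∀ x, |f x| ≤ D * (1 + (x - m) ⬝ᵥ (x - m))) :
    Integrable fun x => f x * weight m C H ε x := by
  refine (((integrable_exp_neg_dotProduct (d := d) (b := η / 8) (by positivity)).comp_sub_right
    m).const_mul (D * Real.exp B * (1 + 1 / (η / 16)) ^ 2)).mono'
    (hf.measurable.mul (measurable_weight hHm)).aestronglyMeasurable
    (Filter.Eventually.of_forall fun x => ?_)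
  have hs := dotProduct_self_nonneg_real (x - m)
  have hD : 0 ≤ D := by
    have := (abs_nonneg _).trans (hfD x)
    by_contra hneg
    nlinarith
  have hw0 : 0 ≤ weight m C H ε x := (Real.exp_pos _).le
  rw [Real.norm_eq_abs, abs_mul, abs_of_nonneg hw0]
  calc |f x| * weight m C H ε x
      ≤ (D * (1 + (x - m) ⬝ᵥ (x - m)) ^ 2) *
          (Real.exp B * Real.exp (-(η / 4 * ((x - m) ⬝ᵥ (x - m))))) := by
        refine mul_le_mul ((hfD x).trans ?_) (weight_le hε0 x (hB x)) hw0 (by positivity)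
        gcongr
        nlinarith
    _ = D * Real.exp B * ((1 + (x - m) ⬝ᵥ (x - m)) ^ 2 *
          Real.exp (-(η / 4 * ((x - m) ⬝ᵥ (x - m))))) := by ring
    _ ≤ D * Real.exp B * ((1 + 1 / (η / 16)) ^ 2 *
          Real.exp (-(η / 8 * ((x - m) ⬝ᵥ (x - m))))) := by
        gcongr D * Real.exp B * ?_
        exact sq_one_add_mul_exp_le hη hs
    _ = _ := by ring

/-- An observable of quadratic growth with Gaussian mean `a` has perturbed mean `a + O(ε)`. -/
theorem abs_integral_mul_density_sub_le {a b B D h z : ℝ} (hη : 0 < η) (hb : 0 < b)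
    (hA : ∀ y : Fin d → ℝ, b * (y ⬝ᵥ y) ≤ y ⬝ᵥ (C⁻¹ *ᵥ y)) (hHm : Measurable H) (hε0 : 0 ≤ ε)
    (hB : ∀ x, -quad m C x + ε * |H x| ≤ B - η / 4 * ((x - m) ⬝ᵥ (x - m)))
    (hD : 0 ≤ D) (hh : 0 ≤ h) (hHh : ∀ x, |H x| ≤ h * (1 + (x - m) ⬝ᵥ (x - m)))
    (hw : Integrable (weight m C H ε)) (hz : 0 < z) (hzZ : z ≤ normConst m C H ε)
    {f : (Fin d → ℝ) → ℝ} (hf : Continuous f)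
    (hfD : ∀ x, |f x - a| ≤ D * (1 + (x - m) ⬝ᵥ (x - m)))
    (hmean : ∫ x, (f x - a) * Real.exp (-quad m C x) = 0) :
    Integrable (fun x => f x * density m C H ε x) ∧
      |(∫ x, f x * density m C H ε x) - a| ≤
        D * h * Real.exp B * (1 + 1 / (η / 16)) ^ 2 *
          (∫ y : Fin d → ℝ, Real.exp (-(η / 8 * (y ⬝ᵥ y)))) / z * ε := by
  have hfa : Continuous fun x => f x - a := by fun_prop
  have hfw : Integrable fun x => f x * weight m C H ε x := by
    refine ((integrable_mul_weight hη hHm hε0 hB hfa hfD).add (hw.const_mul a)).congr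
      (Filter.Eventually.of_forall fun x => ?_)
    simp only [Pi.add_apply]
    ring
  refine ⟨?_, ?_⟩
  · simpa only [density, mul_div_assoc] using hfw.div_const (normConst m C H ε)
  have hE := integrable_exp_neg_dotProduct (d := d) (b := η / 8) (by positivity)
  have key := abs_integral_mul_div_sub_le (f := f) (a := a)
    (κ := ε * (D * h * Real.exp B * (1 + 1 / (η / 16)) ^ 2)) (by positivity)
    (fun x => (Real.exp_pos _).le) hw hfw (integrable_mul_exp_neg_quad hb hA hfa hfD) hmean
    (hE.comp_sub_right m) (fun x => ?_) hz hzZ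
  · rw [integral_sub_right_eq_self (μ := volume)
      (fun y : Fin d → ℝ => Real.exp (-(η / 8 * (y ⬝ᵥ y)))) m] at key
    refine key.trans (le_of_eq ?_)
    ring
  · have hs := dotProduct_self_nonneg_real (x - m)
    rw [abs_mul]
    calc |f x - a| * |weight m C H ε x - Real.exp (-quad m C x)|
        ≤ D * (1 + (x - m) ⬝ᵥ (x - m)) * (ε * (h * (1 + (x - m) ⬝ᵥ (x - m))) *
            (Real.exp B * Real.exp (-(η / 4 * ((x - m) ⬝ᵥ (x - m)))))) := by
          refine mul_le_mul (hfD x) ((abs_weight_sub_le hε0 x (hB x)).trans ?_) (abs_nonneg _)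
            (by positivity)
          gcongr
          exact hHh x
      _ = ε * (D * h * Real.exp B) * ((1 + (x - m) ⬝ᵥ (x - m)) ^ 2 *
            Real.exp (-(η / 4 * ((x - m) ⬝ᵥ (x - m))))) := by ring
      _ ≤ ε * (D * h * Real.exp B) * ((1 + 1 / (η / 16)) ^ 2 *
            Real.exp (-(η / 8 * ((x - m) ⬝ᵥ (x - m))))) := by
          gcongr ε * (D * h * Real.exp B) * ?_
          exact sq_one_add_mul_exp_le hη hs
      _ = _ := by ring

end

end PerturbedGaussian

/-- Perturbed Gaussian moments. The constant `K` depends only on `d, c₀, c₁, M, ε̄` and on a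
positive lower bound `η` for the gap `λ_min(Ĉ⁻¹) - 2 ε̄ c₀`. The norm `‖·‖_∞` of a vector or
matrix is the largest absolute value of an entry, so bounds on it are stated entrywise. -/
theorem perturbed_gaussian_moments (d : ℕ) (c0 c1 M εbar η : ℝ)
    (hc0 : 0 < c0) (hc1 : 0 < c1) (hM : 0 < M) (hεbar : 0 < εbar) (hη : 0 < η) :
    ∃ K : ℝ, 0 < K ∧
      ∀ (m : Fin d → ℝ) (C : Matrix (Fin d) (Fin d) ℝ) (H : (Fin d → ℝ) → ℝ),
        (∀ i, |m i| ≤ M) →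
        C.PosDef →
        (∀ i j, |C i j| ≤ M) →
        (∀ i j, |C⁻¹ i j| ≤ M) →
        2 * εbar * c0 + η ≤ PerturbedGaussian.lambdaMin C⁻¹ →
        Measurable H →
        (∀ x, |H x| ≤ c0 * (x ⬝ᵥ x) + c1) →
        ∀ ε ∈ Set.Icc (0 : ℝ) εbar,
          (Integrable (PerturbedGaussian.weight m C H ε) ∧
            0 < PerturbedGaussian.normConst m C H ε) ∧
          ((∀ i, Integrable fun x : Fin d → ℝ => x i * PerturbedGaussian.density m C H ε x) ∧
            ∀ i, |(∫ x : Fin d → ℝ, x i * PerturbedGaussian.density m C H ε x) - m i|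
              ≤ K * ε) ∧
          ((∀ i j, Integrable fun x : Fin d → ℝ =>
              x i * x j * PerturbedGaussian.density m C H ε x) ∧
            ∀ i j, |(∫ x : Fin d → ℝ, x i * x j * PerturbedGaussian.density m C H ε x)
              - (C i j + m i * m j)| ≤ K * ε) := by
  set B : ℝ := εbar * (c0 * ((1 + 1 / (η / (4 * εbar * c0))) * (d * M ^ 2)) + c1)
  set h : ℝ := 2 * c0 + 2 * c0 * (d * M ^ 2) + c1
  set z : ℝ := Real.exp (-(1 / 2 * (d ^ 2 * M * d)) - εbar * (h * (1 + d))) * 2 ^ d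
  set I : ℝ := ∫ y : Fin d → ℝ, Real.exp (-(η / 8 * (y ⬝ᵥ y)))
  have hh : 0 < h := by positivity
  have hz : 0 < z := by positivity
  have hI : 0 < I := by
    refine integral_exp_pos ?_
    exact PerturbedGaussian.integrable_exp_neg_dotProduct (by positivity)
  refine ⟨(1 + 3 * M) * h * Real.exp B * (1 + 1 / (η / 16)) ^ 2 * I / z, by positivity, ?_⟩
  rintro m C H hm hC hCM hCinv hlam hHm hH ε ⟨hε0, hε⟩
  have hb : 0 < 2 * εbar * c0 + η := by positivity
  have hA : ∀ y : Fin d → ℝ, (2 * εbar * c0 + η) * (y ⬝ᵥ y) ≤ y ⬝ᵥ (C⁻¹ *ᵥ y) := fun y =>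
    (mul_le_mul_of_nonneg_right hlam (PerturbedGaussian.dotProduct_self_nonneg_real y)).trans
      (PerturbedGaussian.lambdaMin_mul_dotProduct_le hC.inv.isHermitian y)
  have hB := PerturbedGaussian.neg_quad_add_le hc0 hεbar hη hm hA hH hε
  have hHh := PerturbedGaussian.abs_le_mul_one_add_dotProduct hc0 hc1 hm hH
  have hw : Integrable (PerturbedGaussian.weight m C H ε) := by
    have := PerturbedGaussian.integrable_mul_weight (D := 1) (f := fun _ => 1) hη hHm hε0 hB
      continuous_const fun x => by
        simpa using PerturbedGaussian.dotProduct_self_nonneg_real (x - m)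
    simpa only [one_mul] using this
  have hzZ := PerturbedGaussian.le_normConst hc0 hc1 hM hm hCinv hH hε0 hε hw
  have hD : 0 ≤ 1 + 3 * M := by positivity
  have h1 : ∀ i, _ := fun i => PerturbedGaussian.abs_integral_mul_density_sub_le hη hb hA hHm hε0
    hB hD hh.le hHh hw hz hzZ (f := fun x => x i) (a := m i) (by fun_prop)
    (fun x => (PerturbedGaussian.abs_apply_le_one_add_dotProduct (x - m) i).trans
      (le_mul_of_one_le_left
        (by linarith [PerturbedGaussian.dotProduct_self_nonneg_real (x - m)]) (by linarith)))
    (PerturbedGaussian.integral_sub_apply_mul_exp_neg_quad i)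
  have h2 : ∀ i j, _ := fun i j => PerturbedGaussian.abs_integral_mul_density_sub_le hη hb hA hHm
    hε0 hB hD hh.le hHh hw hz hzZ (f := fun x => x i * x j) (a := C i j + m i * m j)
    (by fun_prop) (fun x => PerturbedGaussian.abs_apply_mul_apply_sub_le hM hm hCM x i j)
    (PerturbedGaussian.integral_sub_apply_mul_apply_mul_exp_neg_quad hb hC hA i j)
  exact ⟨⟨hw, hz.trans_le hzZ⟩, ⟨fun i => (h1 i).1, fun i => (h1 i).2⟩,
    ⟨fun i j => (h2 i j).1, fun i j => (h2 i j).2⟩⟩
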